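/- For every complex number q with |q| < 1, the power series ∑_{n=0}^∞ T(n) q^n, where T(n) is the number of partitions of n such that, with 2j the largest repeated part, every positive even integer less than 2j appears at least twice, no odd part less than 2j+2 appears, each odd part appears at most once, no part greater than 2j is repeated, and no two parts are consecutive integers, equals ∑_{n=0}^∞ q^(2n(n+1)) (q; q^2)_n (−q^(2n+2); q)_∞ / ((q^2; q^2)_n). -/

import Mathlib

/-- The finite q-Pochhammer symbol `(a; q)_n = ∏_{h=0}^{n-1} (1 - a q^h)`. -/
noncomputable def qPoch (a q : ℂ) (n : ℕ) : ℂ := ∏ h ∈ Finset.range n, (1 - a * q ^ h)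

/-- The infinite q-Pochhammer symbol `(a; q)_∞ = ∏_{h=0}^{∞} (1 - a q^h)`. -/
noncomputable def qPochInf (a q : ℂ) : ℂ := ∏' h : ℕ, (1 - a * q ^ h)

/-- The largest repeated part of a partition (`0` if no part is repeated). -/
def largestRepeatedPart {n : ℕ} (π : n.Partition) : ℕ :=
  (π.parts.toFinset.filter (fun j => 2 ≤ π.parts.count j)).sup id

/-- `T n` is the number of partitions of `n` in which every odd part appears at most once, no
odd part less than (largest repeated part) + 2 appears, every positive even integer less than
the largest repeated part appears at least twice (so no part greater than the largest repeated
part is repeated), and no two parts are consecutive integers. -/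
noncomputable def T (n : ℕ) : ℕ :=
  Nat.card {π : n.Partition //
    (∀ j, Odd j → π.parts.count j ≤ 1) ∧
    (∀ j, Odd j → j < largestRepeatedPart π + 2 → π.parts.count j = 0) ∧
    (∀ j, Even j → 0 < j → j < largestRepeatedPart π → 2 ≤ π.parts.count j) ∧
    (∀ j, ¬(j ∈ π.parts ∧ j + 1 ∈ π.parts))}


open Filter Topology

noncomputable def pp (q : ℂ) (m : ℕ) : ℂ := qPochInf (-(q ^ m)) q

lemma pp_eq (q : ℂ) (m : ℕ) : pp q m = ∏' h : ℕ, (1 + q ^ (m + h)) := by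
  unfold pp qPochInf
  congr 1; ext h; ring

lemma summ_pow (q : ℂ) (hq : ‖q‖ < 1) (m : ℕ) : Summable (fun h : ℕ => ‖q ^ (m + h)‖) := by
  simp only [norm_pow]; simp only [pow_add]
  exact (summable_geometric_of_lt_one (norm_nonneg _) hq).mul_left _

lemma pp_mult (q : ℂ) (hq : ‖q‖ < 1) (m : ℕ) : Multipliable (fun h : ℕ => 1 + q ^ (m + h)) :=
  multipliable_one_add_of_summable (summ_pow q hq m)

lemma pp_rec (q : ℂ) (hq : ‖q‖ < 1) (m : ℕ) : pp q m = (1 + q ^ m) * pp q (m + 1) := by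
  rw [pp_eq, pp_eq, tprod_eq_zero_mul']
  · simp only [add_zero]
    congr 2; ext h; ring
  · convert pp_mult q hq (m + 1) using 3
    ring

lemma pp_near (q : ℂ) (hq : ‖q‖ < 1) (m : ℕ) :
    ‖pp q m - 1‖ ≤ Real.exp (‖q‖ ^ m * (1 - ‖q‖)⁻¹) - 1 := by
  rw [pp_eq]
  have h1 := ((pp_mult q hq m).hasProd.sub_const 1).norm
  refine le_of_tendsto h1 (Eventually.of_forall fun t => ?_)
  refine (Finset.norm_prod_one_add_sub_one_le t _).trans ?_
  gcongr
  have h2 : ∑' h : ℕ, ‖q ^ (m + h)‖ = ‖q‖ ^ m * (1 - ‖q‖)⁻¹ := by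
    simp only [norm_pow]; simp only [pow_add]
    rw [tsum_mul_left, tsum_geometric_of_lt_one (norm_nonneg _) hq]
  rw [← h2]
  exact (summ_pow q hq m).sum_le_tsum _ (fun _ _ => norm_nonneg _)

lemma pp_tendsto (q : ℂ) (hq : ‖q‖ < 1) : Tendsto (pp q) atTop (𝓝 1) := by
  rw [tendsto_iff_norm_sub_tendsto_zero]
  refine squeeze_zero (fun _ => norm_nonneg _) (pp_near q hq) ?_
  have h1 : Tendsto (fun m : ℕ => ‖q‖ ^ m * (1 - ‖q‖)⁻¹) atTop (𝓝 0) := by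
    simpa using (tendsto_pow_atTop_nhds_zero_of_lt_one (norm_nonneg _) hq).mul_const (1 - ‖q‖)⁻¹
  simpa using ((Real.continuous_exp.tendsto 0).comp h1).sub_const 1

lemma pp_bdd (q : ℂ) (hq : ‖q‖ < 1) : ∃ B : ℝ, ∀ m, ‖pp q m‖ ≤ B := by
  obtain ⟨B, hB⟩ := (pp_tendsto q hq).norm.bddAbove_range
  exact ⟨B, fun m => hB ⟨m, rfl⟩⟩

lemma one_sub_ne (q : ℂ) (hq : ‖q‖ < 1) (i : ℕ) : 1 - q ^ (2 * i + 2) ≠ 0 := by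
  intro h
  have h1 : ‖q ^ (2 * i + 2)‖ = 1 := by
    rw [← sub_eq_zero.mp h]; simp
  rw [norm_pow] at h1
  have := pow_lt_one₀ (norm_nonneg q) hq (n := 2 * i + 2) (by omega)
  linarith

lemma qPoch_succ (q : ℂ) (i : ℕ) :
    qPoch (q ^ 2) (q ^ 2) (i + 1) = qPoch (q ^ 2) (q ^ 2) i * (1 - q ^ (2 * i + 2)) := by
  unfold qPoch
  rw [Finset.prod_range_succ]
  congr 2; ring

lemma qPoch_ne (q : ℂ) (hq : ‖q‖ < 1) (i : ℕ) : qPoch (q ^ 2) (q ^ 2) i ≠ 0 := by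
  induction i with
  | zero => simp [qPoch]
  | succ i ih => rw [qPoch_succ]; exact mul_ne_zero ih (one_sub_ne q hq i)

noncomputable def aa (q : ℂ) (i : ℕ) : ℂ := q ^ (2 * i * (i + 1)) / qPoch (q ^ 2) (q ^ 2) i

noncomputable def cc (q : ℂ) (i : ℕ) : ℂ :=
  (-1) ^ i * q ^ (3 * i ^ 2 + 2 * i) / qPoch (q ^ 2) (q ^ 2) i

lemma aa_succ (q : ℂ) (hq : ‖q‖ < 1) (i : ℕ) :
    aa q (i + 1) = aa q i * (q ^ (4 * i + 4) / (1 - q ^ (2 * i + 2))) := by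
  unfold aa
  rw [qPoch_succ]
  have h1 := qPoch_ne q hq i
  have h2 := one_sub_ne q hq i
  field_simp
  ring

lemma cc_succ (q : ℂ) (hq : ‖q‖ < 1) (i : ℕ) :
    cc q (i + 1) * (1 - q ^ (2 * (i + 1))) = - (cc q i * q ^ (6 * i + 5)) := by
  unfold cc
  rw [qPoch_succ, show 2 * (i + 1) = 2 * i + 2 by ring]
  have h1 := qPoch_ne q hq i
  have h2 := one_sub_ne q hq i
  field_simp
  ring

lemma aa_summable (q : ℂ) (hq : ‖q‖ < 1) : Summable (fun i => ‖aa q i‖) := by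
  have key : Tendsto (fun i : ℕ => ‖q ^ (4 * i + 4) / (1 - q ^ (2 * i + 2))‖) atTop (𝓝 0) := by
    have h0 : Tendsto (fun i : ℕ => q ^ i) atTop (𝓝 0) := tendsto_pow_atTop_nhds_zero_of_norm_lt_one hq
    have h1 : Tendsto (fun i : ℕ => q ^ (4 * i + 4)) atTop (𝓝 0) :=
      h0.comp (tendsto_atTop_mono (fun i => by show i ≤ 4 * i + 4; omega) tendsto_id)
    have h2 : Tendsto (fun i : ℕ => q ^ (2 * i + 2)) atTop (𝓝 0) :=
      h0.comp (tendsto_atTop_mono (fun i => by show i ≤ 2 * i + 2; omega) tendsto_id)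
    have := (h1.div (h2.const_sub 1) (by simp)).norm
    simpa using this
  refine summable_of_ratio_norm_eventually_le (r := 1 / 2) (by norm_num) ?_
  filter_upwards [key.eventually_le_const (show (0:ℝ) < 1 / 2 by norm_num)] with i hi
  rw [aa_succ q hq, norm_norm, norm_norm, norm_mul, mul_comm]
  gcongr

lemma cc_summable (q : ℂ) (hq : ‖q‖ < 1) : Summable (fun i => ‖cc q i‖) := by
  refine (aa_summable q hq).of_nonneg_of_le (fun _ => norm_nonneg _) fun i => ?_
  unfold aa cc
  simp only [norm_div, norm_mul, norm_pow, norm_neg, norm_one, one_pow, one_mul]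
  gcongr ?_ / _
  exact pow_le_pow_of_le_one (norm_nonneg _) hq.le (by nlinarith)

def Bd (u : ℕ → ℂ) : Prop := ∃ B : ℝ, ∀ i, ‖u i‖ ≤ B

lemma Bd.add {u v : ℕ → ℂ} (hu : Bd u) (hv : Bd v) : Bd (fun i => u i + v i) := by
  obtain ⟨B, hB⟩ := hu
  obtain ⟨C, hC⟩ := hv
  exact ⟨B + C, fun i => (norm_add_le _ _).trans (add_le_add (hB i) (hC i))⟩

lemma Bd.sub {u v : ℕ → ℂ} (hu : Bd u) (hv : Bd v) : Bd (fun i => u i - v i) := by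
  obtain ⟨B, hB⟩ := hu
  obtain ⟨C, hC⟩ := hv
  exact ⟨B + C, fun i => (norm_sub_le _ _).trans (add_le_add (hB i) (hC i))⟩

lemma Bd.mul {u v : ℕ → ℂ} (hu : Bd u) (hv : Bd v) : Bd (fun i => u i * v i) := by
  obtain ⟨B, hB⟩ := hu
  obtain ⟨C, hC⟩ := hv
  exact ⟨B * C, fun i => by
    rw [norm_mul]
    exact mul_le_mul (hB i) (hC i) (norm_nonneg _) ((norm_nonneg _).trans (hB i))⟩

lemma Bd.pow (q : ℂ) (hq : ‖q‖ < 1) (f : ℕ → ℕ) : Bd (fun i => q ^ f i) :=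
  ⟨1, fun i => by rw [norm_pow]; exact pow_le_one₀ (norm_nonneg _) hq.le⟩

lemma Bd.pp (q : ℂ) (hq : ‖q‖ < 1) (f : ℕ → ℕ) : Bd (fun i => pp q (f i)) := by
  obtain ⟨B, hB⟩ := pp_bdd q hq
  exact ⟨B, fun i => hB _⟩

lemma Bd.const (c : ℂ) : Bd (fun _ => c) := ⟨‖c‖, fun _ => le_rfl⟩

lemma Bd.summable {q : ℂ} (hq : ‖q‖ < 1) {u : ℕ → ℂ} (hu : Bd u) :
    Summable (fun i => cc q i * u i) := by
  obtain ⟨B, hB⟩ := hu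
  refine Summable.of_norm_bounded ((cc_summable q hq).mul_right B) fun i => ?_
  rw [norm_mul]
  exact mul_le_mul_of_nonneg_left (hB i) (norm_nonneg _)

lemma shift {q : ℂ} (hq : ‖q‖ < 1) {u : ℕ → ℂ} (hu : Bd u) :
    ∑' i, cc q i * ((1 - q ^ (2 * i)) * u i) =
      ∑' i, cc q i * (- (q ^ (6 * i + 5) * u (i + 1))) := by
  have hs : Summable (fun i => cc q i * ((1 - q ^ (2 * i)) * u i)) :=
    Bd.summable hq (((Bd.const 1).sub (Bd.pow q hq _)).mul hu)
  rw [hs.tsum_eq_zero_add]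
  simp only [mul_zero, pow_zero, sub_self, zero_mul, zero_add]
  congr 1; ext i
  rw [← mul_assoc, cc_succ q hq]
  ring

noncomputable def HH (q : ℂ) (m : ℕ) : ℂ :=
  ∑' i, cc q i * (q ^ (2 * i * m) * pp q (2 + 2 * i + m))

noncomputable def DD (q : ℂ) (m : ℕ) : ℂ :=
  ∑' i, cc q i * (q ^ (2 * i * m) * (q ^ (2 * i) * pp q (3 + 2 * i + m)
    - q ^ (4 * i) * pp q (4 + 2 * i + m) - q ^ (6 * i + 3 + m) * pp q (5 + 2 * i + m)))

lemma ppr {q : ℂ} (hq : ‖q‖ < 1) (k i m : ℕ) :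
    pp q (k + 2 * i + m) = (1 + q ^ (k + 2 * i + m)) * pp q (k + 1 + 2 * i + m) := by
  rw [pp_rec q hq]; congr 2; ring

lemma HH_DD {q : ℂ} (hq : ‖q‖ < 1) (m : ℕ) :
    HH q m - HH q (m + 1) - q ^ (m + 2) * HH q (m + 2) = q ^ (m + 2) * DD q m := by
  have bq := fun f => Bd.pow q hq f
  have bp := fun f => Bd.pp q hq f
  have hb : Bd (fun i => q ^ (2 * i * m) * pp q (3 + 2 * i + m)) := (bq _).mul (bp _)
  have hs := shift hq hb
  have g : ∀ k, Summable (fun i => cc q i * (q ^ (2 * i * k) * pp q (2 + 2 * i + k))) :=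
    fun k => Bd.summable hq ((bq _).mul (bp _))
  unfold HH DD
  rw [← tsum_mul_left, ← tsum_mul_left, ← Summable.tsum_sub (g m) (g (m + 1)),
    ← Summable.tsum_sub ((g m).sub (g (m + 1))) ((g (m + 2)).mul_left _)]
  · have e1 : ∀ i, cc q i * (q ^ (2 * i * m) * pp q (2 + 2 * i + m)) -
        cc q i * (q ^ (2 * i * (m + 1)) * pp q (2 + 2 * i + (m + 1))) -
        q ^ (m + 2) * (cc q i * (q ^ (2 * i * (m + 2)) * pp q (2 + 2 * i + (m + 2)))) =
        cc q i * ((1 - q ^ (2 * i)) * (q ^ (2 * i * m) * pp q (3 + 2 * i + m))) +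
        cc q i * (q ^ (m + 2) * (q ^ (2 * i * m) * (q ^ (2 * i) * pp q (3 + 2 * i + m) -
          q ^ (4 * i) * pp q (4 + 2 * i + m)))) := by
      intro i
      rw [show 2 + 2 * i + (m + 1) = 3 + 2 * i + m by ring,
        show 2 + 2 * i + (m + 2) = 4 + 2 * i + m by ring, ppr hq 2]
      ring
    simp_rw [e1]
    have s1 : Summable (fun i => cc q i * -(q ^ (6 * i + 5) *
        (q ^ (2 * (i + 1) * m) * pp q (3 + 2 * (i + 1) + m)))) := by
      refine Bd.summable hq ?_
      have := (Bd.const (-1)).mul ((bq (fun i => 6 * i + 5)).mul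
        ((bq (fun i => 2 * (i + 1) * m)).mul (bp (fun i => 3 + 2 * (i + 1) + m))))
      simpa only [neg_mul, one_mul] using this
    have s2 : Summable (fun i => cc q i * (q ^ (m + 2) * (q ^ (2 * i * m) *
        (q ^ (2 * i) * pp q (3 + 2 * i + m) - q ^ (4 * i) * pp q (4 + 2 * i + m))))) :=
      Bd.summable hq ((Bd.const _).mul ((bq _).mul
        (((bq _).mul (bp _)).sub ((bq _).mul (bp _)))))
    have s3 : Summable (fun i => cc q i * ((1 - q ^ (2 * i)) *
        (q ^ (2 * i * m) * pp q (3 + 2 * i + m)))) :=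
      Bd.summable hq (((Bd.const 1).sub (bq _)).mul hb)
    rw [Summable.tsum_add s3 s2, hs, ← Summable.tsum_add s1 s2]
    congr 1; ext i
    rw [show 3 + 2 * (i + 1) + m = 5 + 2 * i + m by ring]
    ring

lemma DD_rec {q : ℂ} (hq : ‖q‖ < 1) (m : ℕ) :
    DD q m = q ^ (2 * m + 7) * DD q (m + 2) := by
  have bq := fun f => Bd.pow q hq f
  have bp := fun f => Bd.pp q hq f
  have hb : Bd (fun i => q ^ (2 * i * m) * (q ^ (2 * i) * pp q (4 + 2 * i + m) +
      q ^ (4 * i + 3 + m) * pp q (5 + 2 * i + m))) :=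
    (bq _).mul (((bq _).mul (bp _)).add ((bq _).mul (bp _)))
  have hs := shift hq hb
  unfold DD
  have e1 : ∀ i, cc q i * (q ^ (2 * i * m) * (q ^ (2 * i) * pp q (3 + 2 * i + m)
    - q ^ (4 * i) * pp q (4 + 2 * i + m) - q ^ (6 * i + 3 + m) * pp q (5 + 2 * i + m))) =
      cc q i * ((1 - q ^ (2 * i)) * (q ^ (2 * i * m) * (q ^ (2 * i) * pp q (4 + 2 * i + m) +
      q ^ (4 * i + 3 + m) * pp q (5 + 2 * i + m)))) +
      cc q i * (q ^ (2 * i * m) * (q ^ (6 * i + 7 + 2 * m) * pp q (5 + 2 * i + m))) := by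
    intro i
    rw [ppr hq 3, ppr hq 4]
    ring
  simp_rw [e1]
  have hsum : Summable (fun i => cc q i * -(q ^ (6 * i + 5) * (q ^ (2 * (i + 1) * m) *
      (q ^ (2 * (i + 1)) * pp q (4 + 2 * (i + 1) + m) +
      q ^ (4 * (i + 1) + 3 + m) * pp q (5 + 2 * (i + 1) + m))))) := by
    refine Bd.summable hq ?_
    have := (Bd.const (-1)).mul ((bq (fun i => 6 * i + 5)).mul
        ((bq (fun i => 2 * (i + 1) * m)).mul
        (((bq (fun i => 2 * (i + 1))).mul (bp (fun i => 4 + 2 * (i + 1) + m))).add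
        ((bq (fun i => 4 * (i + 1) + 3 + m)).mul (bp (fun i => 5 + 2 * (i + 1) + m))))))
    simpa only [neg_mul, one_mul] using this
  rw [Summable.tsum_add, hs, ← Summable.tsum_add hsum, ← tsum_mul_left]
  · congr 1; ext i
    rw [show 3 + 2 * i + (m + 2) = 5 + 2 * i + m by ring,
      show 4 + 2 * i + (m + 2) = 6 + 2 * i + m by ring,
      show 5 + 2 * i + (m + 2) = 7 + 2 * i + m by ring,
      show 4 + 2 * (i + 1) + m = 6 + 2 * i + m by ring,
      show 5 + 2 * (i + 1) + m = 7 + 2 * i + m by ring]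
    ring
  · exact Bd.summable hq ((bq _).mul ((bq _).mul (bp _)))
  · exact Bd.summable hq (((Bd.const 1).sub (bq _)).mul hb)
  · exact Bd.summable hq ((bq _).mul ((bq _).mul (bp _)))

lemma DD_bdd {q : ℂ} (hq : ‖q‖ < 1) : ∃ K : ℝ, ∀ m, ‖DD q m‖ ≤ K := by
  obtain ⟨B, hB⟩ := pp_bdd q hq
  have hB0 : 0 ≤ B := (norm_nonneg _).trans (hB 0)
  have hp : ∀ n, ‖q ^ n‖ ≤ 1 := fun n => by
    rw [norm_pow]; exact pow_le_one₀ (norm_nonneg _) hq.le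
  have hqp : ∀ n k, ‖q ^ n * pp q k‖ ≤ B := fun n k => by
    rw [norm_mul]
    calc _ ≤ 1 * B := mul_le_mul (hp n) (hB k) (norm_nonneg _) zero_le_one
      _ = B := one_mul _
  refine ⟨∑' i, ‖cc q i‖ * (B + B + B), fun m => ?_⟩
  refine tsum_of_norm_bounded ((cc_summable q hq).mul_right _).hasSum fun i => ?_
  rw [norm_mul]
  refine mul_le_mul_of_nonneg_left ?_ (norm_nonneg _)
  rw [norm_mul]
  calc _ ≤ 1 * (B + B + B) := by
        refine mul_le_mul (hp _) ?_ (norm_nonneg _) zero_le_one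
        refine (norm_sub_le _ _).trans (add_le_add ((norm_sub_le _ _).trans
          (add_le_add (hqp _ _) (hqp _ _))) (hqp _ _))
    _ = _ := one_mul _

lemma DD_zero {q : ℂ} (hq : ‖q‖ < 1) (m : ℕ) : DD q m = 0 := by
  obtain ⟨K, hK⟩ := DD_bdd hq
  have hK0 : 0 ≤ K := (norm_nonneg _).trans (hK 0)
  have h : ∀ k m, ‖DD q m‖ ≤ ‖q‖ ^ k * K := by
    intro k
    induction k with
    | zero => intro m; simpa using hK m
    | succ k ih =>
      intro m
      rw [DD_rec hq, norm_mul, pow_succ' ‖q‖ k, mul_assoc]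
      refine mul_le_mul ?_ (ih _) (norm_nonneg _) (norm_nonneg _)
      rw [norm_pow]
      exact pow_le_of_le_one (norm_nonneg _) hq.le (by omega)
  have h2 : Tendsto (fun k : ℕ => ‖q‖ ^ k * K) atTop (𝓝 0) := by
    simpa using (tendsto_pow_atTop_nhds_zero_of_lt_one (norm_nonneg _) hq).mul_const K
  have := ge_of_tendsto' h2 (fun k => h k m)
  exact norm_le_zero_iff.mp this

lemma HH_rec {q : ℂ} (hq : ‖q‖ < 1) (m : ℕ) :
    HH q m = HH q (m + 1) + q ^ (m + 2) * HH q (m + 2) := by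
  have := HH_DD hq m
  rw [DD_zero hq] at this
  linear_combination this

lemma HH_tendsto {q : ℂ} (hq : ‖q‖ < 1) : Tendsto (HH q) atTop (𝓝 1) := by
  obtain ⟨B, hB⟩ := pp_bdd q hq
  have h1 : ∑' i : ℕ, (if i = 0 then (1:ℂ) else 0) = 1 := by simp
  rw [← h1]
  unfold HH
  refine tendsto_tsum_of_dominated_convergence (bound := fun i => ‖cc q i‖ * B)
    ((cc_summable q hq).mul_right B) ?_ ?_
  · intro i
    have hpp : Tendsto (fun m => pp q (2 + 2 * i + m)) atTop (𝓝 1) :=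
      (pp_tendsto q hq).comp (tendsto_atTop_mono (fun m => by show m ≤ 2 + 2 * i + m; omega) tendsto_id)
    rcases Nat.eq_zero_or_pos i with rfl | hi
    · simpa [cc, qPoch] using hpp
    · have hz : Tendsto (fun m => q ^ (2 * i * m)) atTop (𝓝 0) :=
        (tendsto_pow_atTop_nhds_zero_of_norm_lt_one hq).comp
          (tendsto_atTop_mono (fun m => by show m ≤ 2 * i * m; nlinarith) tendsto_id)
      have := (hz.mul hpp).const_mul (cc q i)
      simpa [hi.ne'] using this
  · refine Eventually.of_forall fun m i => ?_
    rw [norm_mul, norm_mul]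
    refine mul_le_mul_of_nonneg_left ?_ (norm_nonneg _)
    calc _ ≤ 1 * B := by
          refine mul_le_mul ?_ (hB _) (norm_nonneg _) zero_le_one
          rw [norm_pow]; exact pow_le_one₀ (norm_nonneg _) hq.le
      _ = B := one_mul _

lemma rec_unique {q : ℂ} (hq : ‖q‖ < 1) (f g : ℕ → ℂ)
    (hf : ∀ m, f m = f (m + 1) + q ^ (m + 2) * f (m + 2))
    (hg : ∀ m, g m = g (m + 1) + q ^ (m + 2) * g (m + 2))
    (hf1 : Tendsto f atTop (𝓝 1)) (hg1 : Tendsto g atTop (𝓝 1)) (m : ℕ) : f m = g m := by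
  set d : ℕ → ℂ := fun m => f m - g m with hd
  set M : ℕ → ℝ := fun m => max ‖d m‖ ‖d (m + 1)‖ with hM
  have hM0 : ∀ m, 0 ≤ M m := fun m => (norm_nonneg _).trans (le_max_left _ _)
  have step : ∀ m, M m ≤ Real.exp (‖q‖ ^ m) * M (m + 1) := by
    intro m
    have e : d m = d (m + 1) + q ^ (m + 2) * d (m + 2) := by
      simp only [hd]; rw [hf m, hg m]; ring
    have h1 : ‖d (m + 1)‖ ≤ M (m + 1) := le_max_left _ _
    have h2 : ‖d (m + 2)‖ ≤ M (m + 1) := le_max_right _ _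
    have h3 : ‖d m‖ ≤ (1 + ‖q‖ ^ m) * M (m + 1) := by
      rw [e]
      refine (norm_add_le _ _).trans ?_
      rw [norm_mul, norm_pow, add_mul, one_mul]
      refine add_le_add h1 (mul_le_mul ?_ h2 (norm_nonneg _) (by positivity))
      exact pow_le_pow_of_le_one (norm_nonneg _) hq.le (by omega)
    have h4 : 1 + ‖q‖ ^ m ≤ Real.exp (‖q‖ ^ m) := by
      rw [add_comm]; exact Real.add_one_le_exp _
    refine max_le (h3.trans (mul_le_mul_of_nonneg_right h4 (hM0 _))) (h1.trans ?_)
    exact le_mul_of_one_le_left (hM0 _) (Real.one_le_exp (by positivity))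
  have iter : ∀ k m, M m ≤ Real.exp (∑ h ∈ Finset.range k, ‖q‖ ^ (m + h)) * M (m + k) := by
    intro k
    induction k with
    | zero => intro m; simp
    | succ k ih =>
      intro m
      refine (ih m).trans ?_
      rw [Finset.sum_range_succ, Real.exp_add, mul_assoc]
      exact mul_le_mul_of_nonneg_left (step _) (Real.exp_pos _).le
  set C := Real.exp (∑' h : ℕ, ‖q‖ ^ (m + h)) with hC
  have hs : Summable (fun h : ℕ => ‖q‖ ^ (m + h)) := by simpa using summ_pow q hq m
  have b : ∀ k, M m ≤ C * M (m + k) := fun k => (iter k m).trans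
    (mul_le_mul_of_nonneg_right (Real.exp_le_exp.mpr
      (hs.sum_le_tsum _ (fun _ _ => by positivity))) (hM0 _))
  have hd0 : Tendsto (fun m => ‖d m‖) atTop (𝓝 0) := by
    simpa using (hf1.sub hg1).norm
  have hMt : Tendsto M atTop (𝓝 0) := by
    simpa using hd0.max ((tendsto_add_atTop_iff_nat 1).mpr hd0)
  have hMt' : Tendsto (fun k => C * M (m + k)) atTop (𝓝 0) := by
    have : Tendsto (fun k => M (m + k)) atTop (𝓝 0) :=
      hMt.comp (tendsto_atTop_mono (fun k => by show k ≤ m + k; omega) tendsto_id)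
    simpa using this.const_mul C
  have h0 : M m ≤ 0 := ge_of_tendsto' hMt' b
  have : ‖d m‖ ≤ 0 := (le_max_left _ _).trans h0
  exact sub_eq_zero.mp (norm_le_zero_iff.mp this)

lemma qbin (q : ℂ) (hq : ‖q‖ < 1) (n : ℕ) :
    ∑ x ∈ Finset.HasAntidiagonal.antidiagonal n, (-1) ^ x.1 * q ^ (x.1 ^ 2) /
      (qPoch (q ^ 2) (q ^ 2) x.1 * qPoch (q ^ 2) (q ^ 2) x.2) =
      qPoch q (q ^ 2) n / qPoch (q ^ 2) (q ^ 2) n := by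
  induction n with
  | zero => simp [qPoch]
  | succ n ih =>
    have hne := one_sub_ne q hq n
    have hP := qPoch_ne q hq
    set F : ℕ × ℕ → ℂ := fun x => (-1) ^ x.1 * q ^ (x.1 ^ 2) /
      (qPoch (q ^ 2) (q ^ 2) x.1 * qPoch (q ^ 2) (q ^ 2) x.2) with hF
    have e1 : (1 - q ^ (2 * n + 2)) * ∑ x ∈ Finset.HasAntidiagonal.antidiagonal (n + 1), F x =
        ∑ x ∈ Finset.HasAntidiagonal.antidiagonal (n + 1), (1 - q ^ (2 * x.2)) * F x +
        ∑ x ∈ Finset.HasAntidiagonal.antidiagonal (n + 1), q ^ (2 * x.2) * (1 - q ^ (2 * x.1)) * F x := by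
      rw [Finset.mul_sum, ← Finset.sum_add_distrib]
      refine Finset.sum_congr rfl fun x hx => ?_
      rw [Finset.HasAntidiagonal.mem_antidiagonal] at hx
      rw [show 2 * n + 2 = 2 * x.1 + 2 * x.2 by omega]
      ring
    rw [Finset.Nat.sum_antidiagonal_succ' (f := fun x => (1 - q ^ (2 * x.2)) * F x),
      Finset.Nat.sum_antidiagonal_succ
        (f := fun x => q ^ (2 * x.2) * (1 - q ^ (2 * x.1)) * F x)] at e1
    simp only [mul_zero, pow_zero, sub_self, zero_mul, zero_add] at e1
    have e2 : ∀ x ∈ Finset.HasAntidiagonal.antidiagonal n, (1 - q ^ (2 * (x.2 + 1))) * F (x.1, x.2 + 1) = F x := by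
      intro x _
      have h1 := one_sub_ne q hq x.2
      simp only [hF, qPoch_succ]
      have h2 := hP x.1
      have h3 := hP x.2
      rw [show 2 * (x.2 + 1) = 2 * x.2 + 2 by ring]
      field_simp
    have e3 : ∀ x ∈ Finset.HasAntidiagonal.antidiagonal n,
        q ^ (2 * x.2) * (1 - q ^ (2 * (x.1 + 1))) * F (x.1 + 1, x.2) = - q ^ (2 * n + 1) * F x := by
      intro x hx
      rw [Finset.HasAntidiagonal.mem_antidiagonal] at hx
      have h1 := one_sub_ne q hq x.1
      simp only [hF, qPoch_succ]
      have h2 := hP x.1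
      have h3 := hP x.2
      rw [show 2 * (x.1 + 1) = 2 * x.1 + 2 by ring, ← hx]
      field_simp
      ring
    rw [Finset.sum_congr rfl e2, Finset.sum_congr rfl e3, ← Finset.mul_sum, ih] at e1
    rw [qPoch_succ]
    have e4 : qPoch q (q ^ 2) (n + 1) = qPoch q (q ^ 2) n * (1 - q ^ (2 * n + 1)) := by
      unfold qPoch
      rw [Finset.prod_range_succ]
      congr 2; ring
    rw [e4]
    have h2 := hP n
    apply mul_left_cancel₀ hne
    rw [e1]
    field_simp
    ring

lemma final_sum {q : ℂ} (hq : ‖q‖ < 1) :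
    ∑' j, aa q j * HH q (2 * j) =
      ∑' n : ℕ, q ^ (2 * n * (n + 1)) * qPoch q (q ^ 2) n * qPochInf (-(q ^ (2 * n + 2))) q /
        qPoch (q ^ 2) (q ^ 2) n := by
  obtain ⟨B, hB⟩ := pp_bdd q hq
  set F : ℕ × ℕ → ℂ := fun x => aa q x.2 * (cc q x.1 *
    (q ^ (2 * x.1 * (2 * x.2)) * pp q (2 + 2 * x.1 + 2 * x.2))) with hF
  have hFs : Summable F := by
    have h := (Summable.mul_of_nonneg (cc_summable q hq) (aa_summable q hq)
      (fun _ => norm_nonneg _) (fun _ => norm_nonneg _)).mul_right B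
    refine Summable.of_norm_bounded h fun x => ?_
    simp only [hF, norm_mul]
    have h1 : ‖q ^ (2 * x.1 * (2 * x.2))‖ ≤ 1 := by
      rw [norm_pow]; exact pow_le_one₀ (norm_nonneg _) hq.le
    calc _ ≤ ‖aa q x.2‖ * (‖cc q x.1‖ * (1 * B)) := by
          refine mul_le_mul_of_nonneg_left (mul_le_mul_of_nonneg_left ?_ (norm_nonneg _)) (norm_nonneg _)
          exact mul_le_mul h1 (hB _) (norm_nonneg _) zero_le_one
      _ = _ := by ring
  have hl : ∑' j, aa q j * HH q (2 * j) = ∑' x, F x := by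
    have hs' : Summable (fun c => F (Equiv.prodComm ℕ ℕ c)) := (Equiv.prodComm ℕ ℕ).summable_iff.mpr hFs
    rw [← (Equiv.prodComm ℕ ℕ).tsum_eq F, Summable.tsum_prod hs']
    congr 1; ext j
    unfold HH
    rw [← tsum_mul_left]
    rfl
  have hs2 : Summable (fun c : (n : ℕ) × (Finset.HasAntidiagonal.antidiagonal n) =>
      F (Finset.HasAntidiagonal.sigmaAntidiagonalEquivProd c)) :=
    Finset.HasAntidiagonal.sigmaAntidiagonalEquivProd.summable_iff.mpr hFs
  rw [hl, ← Finset.HasAntidiagonal.sigmaAntidiagonalEquivProd.tsum_eq F,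
    Summable.tsum_sigma' (fun n => (hasSum_fintype _).summable) hs2]
  congr 1; ext n
  rw [tsum_fintype]
  have hq1 := qbin q hq n
  have : ∀ x ∈ Finset.HasAntidiagonal.antidiagonal n, F x = q ^ (2 * n * (n + 1)) * pp q (2 * n + 2) *
      ((-1) ^ x.1 * q ^ (x.1 ^ 2) /
      (qPoch (q ^ 2) (q ^ 2) x.1 * qPoch (q ^ 2) (q ^ 2) x.2)) := by
    intro x hx
    rw [Finset.HasAntidiagonal.mem_antidiagonal] at hx
    have h2 := qPoch_ne q hq x.1
    have h3 := qPoch_ne q hq x.2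
    simp only [hF, aa, cc]
    rw [show 2 + 2 * x.1 + 2 * x.2 = 2 * n + 2 by omega, ← hx]
    field_simp
    ring
  calc _ = ∑ x ∈ Finset.HasAntidiagonal.antidiagonal n, F x := by
        exact Finset.sum_coe_sort (Finset.HasAntidiagonal.antidiagonal n) F
    _ = _ := by
        rw [Finset.sum_congr rfl this, ← Finset.mul_sum, hq1]
        unfold pp
        ring

def Sp (m : ℕ) (s : Finset ℕ) : Prop := (∀ x ∈ s, m ≤ x) ∧ ∀ x ∈ s, x + 1 ∉ s

noncomputable def GG (q : ℂ) (m : ℕ) : ℂ := ∑' s : {s : Finset ℕ // Sp m s}, ∏ i ∈ s.1, q ^ i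

lemma fin_summable {q : ℂ} (hq : ‖q‖ < 1) : Summable (fun s : Finset ℕ => ∏ i ∈ s, q ^ i) := by
  apply summable_finsetProd_of_summable_norm
  simpa using summ_pow q hq 0

lemma sp_summable {q : ℂ} (hq : ‖q‖ < 1) (m : ℕ) :
    Summable (fun s : {s : Finset ℕ // Sp m s} => ∏ i ∈ s.1, q ^ i) :=
  (fin_summable hq).subtype _

def spMap (m : ℕ) : {s : Finset ℕ // Sp (m + 1) s} ⊕ {s : Finset ℕ // Sp (m + 2) s} →
    {s : Finset ℕ // Sp m s} :=
  Sum.elim (fun s => ⟨s.1, fun x hx => by have := s.2.1 x hx; omega, s.2.2⟩)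
    (fun s => ⟨insert m s.1, by
      constructor
      · intro x hx
        rcases Finset.mem_insert.mp hx with h | h
        · omega
        · have := s.2.1 x h; omega
      · intro x hx hx1
        rcases Finset.mem_insert.mp hx with h | h <;> rcases Finset.mem_insert.mp hx1 with h' | h'
        · omega
        · have := s.2.1 _ h'; omega
        · have := s.2.1 _ h; omega
        · exact s.2.2 x h h'⟩)

lemma spMap_bij (m : ℕ) : Function.Bijective (spMap m) := by
  constructor
  · rintro (⟨s, hs⟩ | ⟨s, hs⟩) (⟨t, ht⟩ | ⟨t, ht⟩) h
    · replace h := congrArg Subtype.val h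
      simp only [spMap, Sum.elim_inl] at h
      subst h; rfl
    · replace h := congrArg Subtype.val h
      simp only [spMap, Sum.elim_inl, Sum.elim_inr] at h
      have := hs.1 m (by rw [h]; simp)
      omega
    · replace h := congrArg Subtype.val h
      simp only [spMap, Sum.elim_inl, Sum.elim_inr] at h
      have := ht.1 m (by rw [← h]; simp)
      omega
    · replace h := congrArg Subtype.val h
      simp only [spMap, Sum.elim_inr] at h
      have h1 : m ∉ s := fun hm => by have := hs.1 m hm; omega
      have h2 : m ∉ t := fun hm => by have := ht.1 m hm; omega
      have : s = t := by rw [← Finset.erase_insert h1, h, Finset.erase_insert h2]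
      subst this; rfl
  · rintro ⟨s, hs⟩
    by_cases hm : m ∈ s
    · refine ⟨Sum.inr ⟨s.erase m, ?_, ?_⟩, ?_⟩
      · intro x hx
        have h1 := Finset.mem_erase.mp hx
        have h2 := hs.1 x h1.2
        have h3 : x ≠ m + 1 := fun h => hs.2 m hm (h ▸ h1.2)
        have := h1.1
        omega
      · intro x hx hx1
        exact hs.2 x (Finset.mem_of_mem_erase hx) (Finset.mem_of_mem_erase hx1)
      · simp [spMap, Finset.insert_erase hm]
    · refine ⟨Sum.inl ⟨s, ?_, hs.2⟩, rfl⟩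
      intro x hx
      have h2 := hs.1 x hx
      have h3 : x ≠ m := fun h => hm (h ▸ hx)
      omega

lemma GG_rec {q : ℂ} (hq : ‖q‖ < 1) (m : ℕ) :
    GG q m = GG q (m + 1) + q ^ m * GG q (m + 2) := by
  unfold GG
  rw [← (Equiv.ofBijective _ (spMap_bij m)).tsum_eq, ← tsum_mul_left]
  have e : ∀ s : {s : Finset ℕ // Sp (m + 2) s}, ∏ i ∈ insert m s.1, q ^ i =
      q ^ m * ∏ i ∈ s.1, q ^ i := fun s =>
    Finset.prod_insert (fun hm => by have := s.2.1 m hm; omega)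
  have h1 := (sp_summable hq (m + 1)).hasSum
  have h2 := ((sp_summable hq (m + 2)).mul_left (q ^ m)).hasSum
  refine (HasSum.sum (f := fun c => ∏ i ∈ (Equiv.ofBijective _ (spMap_bij m) c).1, q ^ i)
    h1 ?_).tsum_eq
  have e' : (fun c => ∏ i ∈ (Equiv.ofBijective _ (spMap_bij m) c).1, q ^ i) ∘ Sum.inr =
      fun s : {s : Finset ℕ // Sp (m + 2) s} => q ^ m * ∏ i ∈ s.1, q ^ i := funext e
  rw [e']
  exact h2

lemma GG_tendsto {q : ℂ} (hq : ‖q‖ < 1) : Tendsto (GG q) atTop (𝓝 1) := by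
  have h1 : ∑' s : Finset ℕ, (if s = ∅ then (1:ℂ) else 0) = 1 := by simp
  rw [← h1]
  have h2 : GG q = fun m => ∑' s : Finset ℕ, ({s | Sp m s}.indicator (fun s => ∏ i ∈ s, q ^ i) s) := by
    ext m
    exact tsum_subtype {s | Sp m s} (fun s => ∏ i ∈ s, q ^ i)
  rw [h2]
  refine tendsto_tsum_of_dominated_convergence (fin_summable hq).norm ?_ ?_
  · intro s
    rcases s.eq_empty_or_nonempty with rfl | ⟨x, hx⟩
    · have : ∀ m, ∅ ∈ {s | Sp m s} := fun m => by simp [Sp]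
      simp [Set.indicator_of_mem (this _)]
    · rw [if_neg (Finset.ne_empty_of_mem hx)]
      refine tendsto_const_nhds.congr' ?_
      filter_upwards [eventually_gt_atTop x] with m hm
      rw [Set.indicator_of_notMem]
      intro h
      have := h.1 x hx
      omega
  · exact Eventually.of_forall fun m s => norm_indicator_le_norm_self _ _

lemma GG_eq {q : ℂ} (hq : ‖q‖ < 1) (m : ℕ) : GG q (m + 2) = HH q m :=
  rec_unique hq (fun m => GG q (m + 2)) (HH q) (fun m => GG_rec hq (m + 2)) (HH_rec hq)
    ((tendsto_add_atTop_iff_nat 2).mpr (GG_tendsto hq)) (HH_tendsto hq) m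

def wf {j : ℕ} (f : Fin j → ℕ) : ℕ := ∑ i : Fin j, (2 * (i : ℕ) + 2) * (f i + 2)

lemma hs_mul {ι κ : Type} (f : ι → ℂ) (g : κ → ℂ) {s t : ℂ} (hf : HasSum f s) (hg : HasSum g t) :
    HasSum (fun x : ι × κ => f x.1 * g x.2) (s * t) :=
  HasSum.mul hf hg (summable_mul_of_summable_norm (f := f) (g := g) hf.summable.norm hg.summable.norm)

lemma pi_sum {q : ℂ} (hq : ‖q‖ < 1) (j : ℕ) :
    HasSum (fun f : Fin j → ℕ => q ^ wf f) (aa q j) ∧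
    Summable (fun f : Fin j → ℕ => ‖q ^ wf f‖) := by
  induction j with
  | zero =>
    constructor
    · convert hasSum_fintype (fun f : Fin 0 → ℕ => q ^ wf f)
      simp [aa, wf, qPoch]
    · exact (hasSum_fintype _).summable
  | succ j ih =>
    have hr : ‖q ^ (2 * j + 2)‖ < 1 := by
      rw [norm_pow]; exact pow_lt_one₀ (norm_nonneg q) hq (by omega)
    have g1 : HasSum (fun n : ℕ => q ^ ((2 * j + 2) * (n + 2)))
        (q ^ (4 * j + 4) / (1 - q ^ (2 * j + 2))) := by
      have := (hasSum_geometric_of_norm_lt_one hr).mul_left (q ^ (4 * j + 4))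
      rw [← div_eq_mul_inv] at this
      have e0 : (fun n : ℕ => q ^ ((2 * j + 2) * (n + 2))) =
          fun n => q ^ (4 * j + 4) * (q ^ (2 * j + 2)) ^ n := by
        ext n
        rw [← pow_mul, ← pow_add]
        ring
      rw [e0]
      exact this
    have e : (fun f : Fin (j + 1) → ℕ => q ^ wf f) ∘ (Fin.snocEquiv (fun _ => ℕ)) =
        fun p : ℕ × (Fin j → ℕ) => q ^ ((2 * j + 2) * (p.1 + 2)) * q ^ wf p.2 := by
      ext p
      simp only [Function.comp, Fin.snocEquiv, Equiv.coe_fn_mk, wf]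
      rw [Fin.sum_univ_castSucc, ← pow_add, add_comm]
      simp only [Fin.snoc_castSucc, Fin.snoc_last, Fin.val_castSucc, Fin.val_last]
    have key : HasSum (fun f : Fin (j + 1) → ℕ => q ^ wf f) (aa q (j + 1)) := by
      rw [← (Fin.snocEquiv (fun _ => ℕ)).hasSum_iff, e, aa_succ q hq, mul_comm (aa q j)]
      exact hs_mul (fun n : ℕ => q ^ ((2 * j + 2) * (n + 2))) (fun f : Fin j → ℕ => q ^ wf f) g1 ih.1
    exact ⟨key, key.summable.norm⟩

abbrev XX := (j : ℕ) × ((Fin j → ℕ) × {s : Finset ℕ // Sp (2 * j + 2) s})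

def wt (x : XX) : ℕ := wf x.2.1 + ∑ i ∈ x.2.2.1, i

lemma fiber_sum {q : ℂ} (hq : ‖q‖ < 1) (j : ℕ) :
    HasSum (fun y : (Fin j → ℕ) × {s : Finset ℕ // Sp (2 * j + 2) s} => q ^ wt ⟨j, y⟩)
      (aa q j * GG q (2 * j + 2)) := by
  have h1 := pi_sum hq j
  have h2 := sp_summable hq (2 * j + 2)
  have h3 := hs_mul _ _ h1.1 h2.hasSum
  have e : (fun y : (Fin j → ℕ) × {s : Finset ℕ // Sp (2 * j + 2) s} => q ^ wt ⟨j, y⟩) =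
      fun y => q ^ wf y.1 * ∏ i ∈ y.2.1, q ^ i := by
    ext y
    rw [Finset.prod_pow_eq_pow_sum, ← pow_add]
    rfl
  rw [e]
  exact h3

lemma base_summable {q : ℂ} (hq : ‖q‖ < 1) :
    Summable (fun j => aa q j * GG q (2 * j + 2)) := by
  obtain ⟨B, hB⟩ := (GG_tendsto hq).norm.bddAbove_range
  refine Summable.of_norm_bounded ((aa_summable q hq).mul_right B) fun j => ?_
  rw [norm_mul]
  exact mul_le_mul_of_nonneg_left (hB ⟨_, rfl⟩) (norm_nonneg _)

lemma XX_summable {q : ℂ} (hq : ‖q‖ < 1) : Summable (fun x : XX => q ^ wt x) := by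
  apply Summable.of_norm
  have hR : ‖((‖q‖ : ℝ) : ℂ)‖ < 1 := by simpa using hq
  have hfib : ∀ j, HasSum (fun y : (Fin j → ℕ) × {s : Finset ℕ // Sp (2 * j + 2) s} =>
      ((‖q ^ wt ⟨j, y⟩‖ : ℝ) : ℂ)) (aa (‖q‖ : ℝ) j * GG (‖q‖ : ℝ) (2 * j + 2)) := by
    intro j
    simpa using fiber_sum hR j
  have hfs : ∀ j, Summable (fun y : (Fin j → ℕ) × {s : Finset ℕ // Sp (2 * j + 2) s} =>
      ‖q ^ wt ⟨j, y⟩‖) := fun j => Complex.summable_ofReal.mp (hfib j).summable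
  rw [summable_sigma_of_nonneg (fun _ => norm_nonneg _)]
  refine ⟨hfs, ?_⟩
  rw [← Complex.summable_ofReal]
  convert base_summable hR using 2 with j
  rw [Complex.ofReal_tsum]
  exact (hfib j).tsum_eq

lemma XX_hasSum {q : ℂ} (hq : ‖q‖ < 1) :
    HasSum (fun x : XX => q ^ wt x) (∑' j, aa q j * GG q (2 * j + 2)) :=
  HasSum.sigma_of_hasSum (base_summable hq).hasSum (fun j => fiber_sum hq j) (XX_summable hq)

def toM (x : XX) : Multiset ℕ :=
  x.2.2.1.val + ∑ i : Fin x.1, Multiset.replicate (x.2.1 i + 2) (2 * (i : ℕ) + 2)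

lemma toM_sum (x : XX) : (toM x).sum = wt x := by
  unfold toM wt wf
  rw [Multiset.sum_add, ← Multiset.coe_sumAddMonoidHom, map_sum, add_comm]
  congr 1
  · refine Finset.sum_congr rfl fun i _ => ?_
    rw [Multiset.coe_sumAddMonoidHom, Multiset.sum_replicate, smul_eq_mul, mul_comm]
  · exact (Finset.sum_val _)

lemma toM_count (x : XX) (k : ℕ) : (toM x).count k = (if k ∈ x.2.2.1 then 1 else 0) +
    ∑ i : Fin x.1, if 2 * (i : ℕ) + 2 = k then x.2.1 i + 2 else 0 := by
  unfold toM
  rw [Multiset.count_add, Multiset.count_sum']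
  congr 1
  · rw [Multiset.count_eq_of_nodup x.2.2.1.nodup]; rfl
  · exact Finset.sum_congr rfl fun i _ => Multiset.count_replicate _ _ _

lemma count_small (x : XX) (i : Fin x.1) : (toM x).count (2 * (i : ℕ) + 2) = x.2.1 i + 2 := by
  rw [toM_count, if_neg, Finset.sum_eq_single i]
  · simp
  · intro b _ hb
    rw [if_neg]
    intro h
    exact hb (Fin.ext (by omega))
  · simp
  · intro h
    have := x.2.2.2.1 _ h
    have := i.2
    omega

lemma count_other (x : XX) (k : ℕ) (hk : ∀ i, i < x.1 → 2 * i + 2 ≠ k) :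
    (toM x).count k = if k ∈ x.2.2.1 then 1 else 0 := by
  rw [toM_count, Finset.sum_eq_zero, add_zero]
  intro i _
  rw [if_neg (hk i i.2)]

lemma count_odd (x : XX) (k : ℕ) (hk : Odd k) :
    (toM x).count k = if k ∈ x.2.2.1 then 1 else 0 := by
  apply count_other
  intro i _ h
  obtain ⟨a, ha⟩ := hk
  omega

lemma count_big (x : XX) (k : ℕ) (hk : 2 * x.1 < k) :
    (toM x).count k = if k ∈ x.2.2.1 then 1 else 0 := by
  apply count_other
  intro i hi h
  omega

lemma count_zero' (x : XX) : (toM x).count 0 = 0 := by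
  rw [count_other x 0 (by intros; omega), if_neg]
  intro h
  have := x.2.2.2.1 _ h
  omega

def Rm (m : Multiset ℕ) : ℕ := (m.toFinset.filter (fun j => 2 ≤ m.count j)).sup id

lemma le_Rm {m : Multiset ℕ} {k : ℕ} (h : 2 ≤ m.count k) : k ≤ Rm m := by
  have : k ∈ m.toFinset.filter (fun j => 2 ≤ m.count j) := by
    rw [Finset.mem_filter, Multiset.mem_toFinset]
    exact ⟨Multiset.count_pos.mp (by omega), h⟩
  exact Finset.le_sup (f := id) this

lemma Rm_mem {m : Multiset ℕ} (h : 0 < Rm m) : 2 ≤ m.count (Rm m) := by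
  have hne : (m.toFinset.filter (fun j => 2 ≤ m.count j)).Nonempty := by
    rw [Finset.nonempty_iff_ne_empty]
    intro h0
    unfold Rm at h
    rw [h0] at h
    simp at h
  obtain ⟨k, hk, e⟩ := Finset.exists_mem_eq_sup _ hne id
  have : Rm m = k := e
  rw [this]
  exact (Finset.mem_filter.mp hk).2

lemma Rm_toM (x : XX) : Rm (toM x) = 2 * x.1 := by
  apply le_antisymm
  · refine Finset.sup_le fun k hk => ?_
    have h := (Finset.mem_filter.mp hk).2
    by_contra hlt
    rw [count_big x k (by simpa using hlt)] at h
    split_ifs at h <;> omega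
  · rcases Nat.eq_zero_or_pos x.1 with h0 | h0
    · omega
    · apply le_Rm
      have := count_small x ⟨x.1 - 1, by omega⟩
      simp only at this
      rw [show 2 * (x.1 - 1) + 2 = 2 * x.1 by omega] at this
      omega

def Good (m : Multiset ℕ) : Prop :=
    (∀ j, Odd j → m.count j ≤ 1) ∧
    (∀ j, Odd j → j < Rm m + 2 → m.count j = 0) ∧
    (∀ j, Even j → 0 < j → j < Rm m → 2 ≤ m.count j) ∧
    (∀ j, ¬(j ∈ m ∧ j + 1 ∈ m))

lemma toM_good (x : XX) : Good (toM x) := by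
  refine ⟨?_, ?_, ?_, ?_⟩
  · intro j hj
    rw [count_odd x j hj]
    split_ifs <;> omega
  · intro j hj hlt
    rw [Rm_toM] at hlt
    rw [count_odd x j hj, if_neg]
    intro h
    have := x.2.2.2.1 _ h
    omega
  · intro j hj h0 hlt
    rw [Rm_toM] at hlt
    obtain ⟨a, ha⟩ := hj
    have := count_small x ⟨a - 1, by omega⟩
    simp only at this
    rw [show 2 * (a - 1) + 2 = j by omega] at this
    omega
  · rintro j ⟨h1, h2⟩
    have h1' := Multiset.count_pos.mpr h1
    have h2' := Multiset.count_pos.mpr h2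
    have hs : ∀ k, Odd k → 0 < (toM x).count k → k ∈ x.2.2.1 := by
      intro k hk h
      rw [count_odd x k hk] at h
      by_contra hc
      simp [hc] at h
    have hb : ∀ k, 2 * x.1 < k → 0 < (toM x).count k → k ∈ x.2.2.1 := by
      intro k hk h
      rw [count_big x k hk] at h
      by_contra hc
      simp [hc] at h
    rcases Nat.even_or_odd j with he | ho
    · have h3 := hs (j + 1) he.add_one h2'
      have h4 := x.2.2.2.1 _ h3
      have h5 : j ≠ 2 * x.1 + 1 := by
        obtain ⟨a, ha⟩ := he
        omega
      exact x.2.2.2.2 j (hb j (by omega) h1') h3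
    · have h3 := hs j ho h1'
      have h4 := x.2.2.2.1 _ h3
      exact x.2.2.2.2 j h3 (hb (j + 1) (by omega) h2')

lemma toM_inj : Function.Injective toM := by
  rintro ⟨j, f, s⟩ ⟨j', f', s'⟩ h
  have hj : 2 * j = 2 * j' := by
    have h1 := Rm_toM ⟨j, f, s⟩
    have h2 := Rm_toM ⟨j', f', s'⟩
    rw [h] at h1
    exact h1.symm.trans h2
  obtain rfl : j = j' := by omega
  have hf : f = f' := by
    ext i
    have h1 := count_small ⟨j, f, s⟩ i
    have h2 := count_small ⟨j, f', s'⟩ i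
    rw [h] at h1
    have h3 := h1.symm.trans h2
    simp only at h3
    omega
  have hs : s = s' := by
    apply Subtype.ext
    ext k
    by_cases hk : 2 * j < k
    · have h1 := count_big ⟨j, f, s⟩ k hk
      have h2 := count_big ⟨j, f', s'⟩ k hk
      rw [h] at h1
      have h3 := h1.symm.trans h2
      simp only at h3
      by_cases a : k ∈ s.1 <;> by_cases b : k ∈ s'.1 <;> simp_all
    · constructor
      · intro hh
        have := s.2.1 _ hh
        omega
      · intro hh
        have := s'.2.1 _ hh
        omega
  rw [hf, hs]

lemma toM_surj (m : Multiset ℕ) (h0 : 0 ∉ m) (hm : Good m) : ∃ x, toM x = m := by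
  obtain ⟨g1, g2, g3, g4⟩ := hm
  have hev : Even (Rm m) := by
    by_contra ho
    rw [Nat.not_even_iff_odd] at ho
    have h1 := g1 _ ho
    have h2 := Rm_mem (m := m) ho.pos
    omega
  obtain ⟨j, hj⟩ := hev
  have hsp : Sp (2 * j + 2) (m.toFinset.filter (fun k => 2 * j < k)) := by
    constructor
    · intro x hx
      rw [Finset.mem_filter, Multiset.mem_toFinset] at hx
      have : x ≠ 2 * j + 1 := by
        intro h
        have h1 := g2 x ⟨j, h⟩ (by omega)
        have h2 := Multiset.count_pos.mpr hx.1
        omega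
      omega
    · intro x hx hx1
      rw [Finset.mem_filter, Multiset.mem_toFinset] at hx hx1
      exact g4 x ⟨hx.1, hx1.1⟩
  set x : XX := ⟨j, fun i => m.count (2 * (i : ℕ) + 2) - 2, ⟨_, hsp⟩⟩ with hx
  have hx1 : x.1 = j := rfl
  have hx2 : ∀ i : Fin j, x.2.1 i = m.count (2 * (i : ℕ) + 2) - 2 := fun _ => rfl
  have hx3 : ∀ k, k ∈ x.2.2.1 ↔ k ∈ m ∧ 2 * j < k := by
    intro k
    show k ∈ m.toFinset.filter (fun k => 2 * j < k) ↔ _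
    rw [Finset.mem_filter, Multiset.mem_toFinset]
  refine ⟨x, ?_⟩
  ext k
  rcases Nat.eq_zero_or_pos k with rfl | hk
  · rw [count_zero', Multiset.count_eq_zero_of_notMem h0]
  by_cases hbig : 2 * j < k
  · rw [count_big x k hbig]
    have h1 : m.count k ≤ 1 := by
      by_contra hc
      have := le_Rm (m := m) (k := k) (by omega)
      omega
    have h2 : k ∈ x.2.2.1 ↔ k ∈ m := by
      rw [hx3]; exact and_iff_left hbig
    by_cases hkm : k ∈ m
    · rw [if_pos (h2.mpr hkm)]
      have := Multiset.count_pos.mpr hkm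
      omega
    · rw [if_neg (fun h => hkm (h2.mp h)), Multiset.count_eq_zero_of_notMem hkm]
  rcases Nat.even_or_odd k with he | ho
  · have h2 : 2 ≤ m.count k := by
      rcases Nat.lt_or_ge k (Rm m) with hlt | hge
      · exact g3 k he hk hlt
      · have : k = Rm m := by omega
        rw [this]
        exact Rm_mem (by omega)
    obtain ⟨a, ha⟩ := he
    have := count_small x ⟨a - 1, by omega⟩
    rw [hx2] at this
    simp only at this
    rw [show 2 * (a - 1) + 2 = k by omega] at this
    omega
  · rw [count_odd x k ho, g2 k ho (by omega), if_neg]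
    intro h
    have := x.2.2.2.1 _ h
    omega

abbrev TP (n : ℕ) := {π : n.Partition //
    (∀ j, Odd j → π.parts.count j ≤ 1) ∧
    (∀ j, Odd j → j < largestRepeatedPart π + 2 → π.parts.count j = 0) ∧
    (∀ j, Even j → 0 < j → j < largestRepeatedPart π → 2 ≤ π.parts.count j) ∧
    (∀ j, ¬(j ∈ π.parts ∧ j + 1 ∈ π.parts))}

def toTP (x : XX) : (n : ℕ) × TP n :=
  ⟨wt x, ⟨⟨toM x, by
    intro i hi
    rcases Nat.eq_zero_or_pos i with rfl | h
    · have := Multiset.count_pos.mpr hi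
      rw [count_zero'] at this
      omega
    · exact h, toM_sum x⟩, toM_good x⟩⟩

lemma toTP_bij : Function.Bijective toTP := by
  constructor
  · intro x y h
    exact toM_inj (congrArg (fun p : (n : ℕ) × TP n => p.2.1.parts) h)
  · rintro ⟨n, ⟨⟨parts, pos, hsum⟩, h⟩⟩
    obtain ⟨x, hx⟩ := toM_surj parts (fun h => lt_irrefl _ (pos h)) h
    subst hx
    obtain rfl : wt x = n := (toM_sum x).symm.trans hsum
    exact ⟨x, rfl⟩

lemma T_hasSum {q : ℂ} (hq : ‖q‖ < 1) :
    HasSum (fun n : ℕ => (T n : ℂ) * q ^ n) (∑' j, aa q j * GG q (2 * j + 2)) := by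
  have h1 : HasSum (fun p : (n : ℕ) × TP n => q ^ p.1) (∑' j, aa q j * GG q (2 * j + 2)) := by
    rw [← (Equiv.ofBijective _ toTP_bij).hasSum_iff]
    exact XX_hasSum hq
  refine h1.sigma fun n => ?_
  have : Fintype (TP n) := Fintype.ofFinite _
  have h2 := hasSum_fintype (fun _ : TP n => q ^ n)
  convert h2 using 1
  rw [Finset.sum_const, nsmul_eq_mul, Finset.card_univ, ← Nat.card_eq_fintype_card]
  rfl

/-- The generating function of `T(n)` equals Slater's series. -/
theorem T_genfun (q : ℂ) (hq : ‖q‖ < 1) :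
    ∑' n : ℕ, (T n : ℂ) * q ^ n =
      ∑' n : ℕ, q ^ (2 * n * (n + 1)) * qPoch q (q ^ 2) n * qPochInf (-(q ^ (2 * n + 2))) q /
        qPoch (q ^ 2) (q ^ 2) n := by
  rw [(T_hasSum hq).tsum_eq, ← final_sum hq]
  congr 1; ext j
  rw [GG_eq hq]
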